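/- For every constant c₁ ≥ 1 there exists a constant c₆ > 0, depending only on d, K₀, κ, α, ℓ and c₁, with the following property: for every x₀ ∈ ℝ^d, every r ∈ (0,1/2], and every nonnegative function f ∈ C²_b(ℝ^d) such that f(x) = |x−x₀|² for |x−x₀| ≤ r/2, f(x) = r² for |x−x₀| ≥ r, and ‖f‖_∞ ≤ c₁ r², ‖∂f/∂x_i‖_∞ ≤ c₁ r, ‖∂²f/∂x_i∂x_j‖_∞ ≤ c₁ for all 1 ≤ i,j ≤ d, one has ℒf(x) ≤ c₆ r² L(r) for all x ∈ B_r(x₀). -/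

import Mathlib

open MeasureTheory Metric Set Filter
open scoped ENNReal Topology

noncomputable section

/-- `L(r) = ∫_r^1 ℓ(s)/s ds`. -/
def Lfun (ℓ : ℝ → ℝ) (r : ℝ) : ℝ := ∫ s in r..1, ℓ s / s

/-- `ℓ` varies regularly at `0+` with index `ρ`. -/
def RegVaryAt0 (ℓ : ℝ → ℝ) (ρ : ℝ) : Prop :=
  ∀ lam : ℝ, 0 < lam →
    Filter.Tendsto (fun r => ℓ (lam * r) / ℓ r) (𝓝[>] (0 : ℝ)) (𝓝 (lam ^ ρ))

/-- `ℓ` is bounded away from `0` and `∞` on compact subsets of `(0,1)`. -/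
def LocBddAway (ℓ : ℝ → ℝ) : Prop :=
  ∀ a b : ℝ, 0 < a → a ≤ b → b < 1 →
    ∃ m M : ℝ, 0 < m ∧ ∀ s : ℝ, a ≤ s → s ≤ b → m ≤ ℓ s ∧ ℓ s ≤ M

/-- bounded `C²` functions on `ℝ^d`. -/
def C2b (d : ℕ) (f : EuclideanSpace ℝ (Fin d) → ℝ) : Prop :=
  ContDiff ℝ 2 f ∧
    ∃ C : ℝ, ∀ x, |f x| ≤ C ∧ ‖fderiv ℝ f x‖ ≤ C ∧ ‖fderiv ℝ (fderiv ℝ f) x‖ ≤ C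

/-- the integro-differential operator `ℒ`. -/
def opL (d : ℕ) (K : EuclideanSpace ℝ (Fin d) → EuclideanSpace ℝ (Fin d) → ℝ)
    (f : EuclideanSpace ℝ (Fin d) → ℝ) (x : EuclideanSpace ℝ (Fin d)) : ℝ :=
  ∫ h in ({0}ᶜ : Set (EuclideanSpace ℝ (Fin d))),
    (f (x + h) - f x - (if ‖h‖ < 1 then fderiv ℝ f x h else 0)) * K x h

/-- the exit time `τ_B = inf {t > 0 : X_t ∉ B}`, valued in `ℝ≥0∞`. -/
def exitT {Ω : Type*} {d : ℕ} (X : ℝ → Ω → EuclideanSpace ℝ (Fin d))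
    (B : Set (EuclideanSpace ℝ (Fin d))) (ω : Ω) : ℝ≥0∞ :=
  sInf {t : ℝ≥0∞ | 0 < t ∧ t ≠ ∞ ∧ X t.toReal ω ∉ B}

/-- the hitting time `T_A = inf {t > 0 : X_t ∈ A}`, valued in `ℝ≥0∞`. -/
def hitT {Ω : Type*} {d : ℕ} (X : ℝ → Ω → EuclideanSpace ℝ (Fin d))
    (A : Set (EuclideanSpace ℝ (Fin d))) (ω : Ω) : ℝ≥0∞ :=
  sInf {t : ℝ≥0∞ | 0 < t ∧ t ≠ ∞ ∧ X t.toReal ω ∈ A}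

/-- conditions (K1)-(K3) on the kernel `K`: measurability, nonnegativity,
`sup_x ∫ (1 ∧ |h|²) K(x,h) dh ≤ K₀`, symmetry, and the bounds
`κ⁻¹ ℓ(|h|)|h|^{-d} ≤ K(x,h) ≤ κ ℓ(|h|)|h|^{-d}` for `0 < |h| ≤ 1`. -/
def KernelConds (d : ℕ) (K₀ κ : ℝ) (ℓ : ℝ → ℝ)
    (K : EuclideanSpace ℝ (Fin d) → EuclideanSpace ℝ (Fin d) → ℝ) : Prop :=
  Measurable (Function.uncurry K) ∧ (∀ x h, 0 ≤ K x h) ∧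
  (∀ x, (∫⁻ h in ({0}ᶜ : Set (EuclideanSpace ℝ (Fin d))),
      ENNReal.ofReal (min 1 (‖h‖ ^ 2) * K x h)) ≤ ENNReal.ofReal K₀) ∧
  (∀ x h, K x h = K x (-h)) ∧
  (∀ x h, 0 < ‖h‖ → ‖h‖ ≤ 1 →
    κ⁻¹ * (ℓ ‖h‖ / ‖h‖ ^ d) ≤ K x h ∧ K x h ≤ κ * (ℓ ‖h‖ / ‖h‖ ^ d))

/-! Symmetry of `K` removes the gradient term: `2 ℒf(x)` is the integral of the second difference
`f(x+h) + f(x-h) - 2 f(x)` against `K(x, h)`, and this difference is `O(min(r², |h|²))`. In polar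
coordinates the truncated second moment `∫ min(r², |h|²) K(x, h) dh` is therefore controlled by
`∫₀^r s ℓ(s) ds + r² L(r)`, plus `r² K₀` from `|h| ≥ 1`. It remains to see that
`F(r) = ∫₀^r s ℓ(s) ds` is `O(r² L(r))`. Since the index of regular variation of `ℓ` exceeds `-2`,
`ℓ(s/2) ≤ b ℓ(s)` near `0` for some `b < 4`; rescaling then gives both `F(r/2) ≤ (b/4) F(r)` and
`F(r) - F(r/2) ≤ b r² L(r)`, hence `F(r) ≤ (b/4) F(r) + b r² L(r)`. -/

/-! ### Second-order Taylor bounds -/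

section Calculus

lemma opNorm_le_card_mul_of_orthonormalBasis {𝕜 ι E F : Type*} [RCLike 𝕜] [Fintype ι]
    [NormedAddCommGroup E] [InnerProductSpace 𝕜 E] [NormedAddCommGroup F] [NormedSpace 𝕜 F]
    (b : OrthonormalBasis ι 𝕜 E) (T : E →L[𝕜] F) {c : ℝ} (hT : ∀ i, ‖T (b i)‖ ≤ c) :
    ‖T‖ ≤ Fintype.card ι * c := by
  have hsum : (∑ _i : ι, c) = Fintype.card ι * c := by simp
  refine T.opNorm_le_bound ?_ fun v => ?_
  · exact hsum ▸ Finset.sum_nonneg fun i _ => (norm_nonneg _).trans (hT i)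
  calc ‖T v‖ = ‖∑ i, inner 𝕜 (b i) v • T (b i)‖ := by
        conv_lhs => rw [← b.sum_repr' v, map_sum]
        simp only [map_smul]
    _ ≤ ∑ i, ‖inner 𝕜 (b i) v • T (b i)‖ := norm_sum_le _ _
    _ ≤ ∑ _i : ι, c * ‖v‖ := by
        refine Finset.sum_le_sum fun i _ => ?_
        have hinner : ‖inner 𝕜 (b i) v‖ ≤ ‖v‖ := by
          simpa using norm_inner_le_norm (𝕜 := 𝕜) (b i) v
        rw [norm_smul, mul_comm]
        exact mul_le_mul (hT i) hinner (norm_nonneg _) ((norm_nonneg _).trans (hT i))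
    _ = Fintype.card ι * c * ‖v‖ := by rw [← Finset.sum_mul, hsum]

lemma norm_bilin_le_of_abs_apply_single_le {d : ℕ}
    (B : EuclideanSpace ℝ (Fin d) →L[ℝ] EuclideanSpace ℝ (Fin d) →L[ℝ] ℝ) {c : ℝ}
    (hB : ∀ i j : Fin d,
      |B (EuclideanSpace.single i (1 : ℝ)) (EuclideanSpace.single j (1 : ℝ))| ≤ c) :
    ‖B‖ ≤ d ^ 2 * c := by
  let b := EuclideanSpace.basisFun (Fin d) ℝ
  have hrow : ∀ i, ‖B (b i)‖ ≤ d * c := fun i => by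
    simpa using opNorm_le_card_mul_of_orthonormalBasis b (B (b i)) (c := c)
      fun j => by simpa [b] using hB i j
  simpa [sq, mul_assoc] using opNorm_le_card_mul_of_orthonormalBasis b B hrow

variable {E F : Type*} [NormedAddCommGroup E] [NormedSpace ℝ E]
  [NormedAddCommGroup F] [NormedSpace ℝ F]

lemma norm_sub_sub_fderiv_le {f : E → F} (hf : ContDiff ℝ 2 f) {C : ℝ}
    (hC : ∀ y, ‖fderiv ℝ (fderiv ℝ f) y‖ ≤ C) (x h : E) :
    ‖f (x + h) - f x - fderiv ℝ f x h‖ ≤ C * ‖h‖ ^ 2 := by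
  have hf' : Differentiable ℝ (fderiv ℝ f) :=
    (hf.fderiv_right (m := 1) (by norm_num)).differentiable (by norm_num)
  have hfderiv : ∀ z ∈ closedBall x ‖h‖, ‖fderiv ℝ f z - fderiv ℝ f x‖ ≤ C * ‖h‖ := by
    intro z hz
    refine (convex_univ.norm_image_sub_le_of_norm_fderiv_le (𝕜 := ℝ) (fun w _ => hf' w)
      (fun w _ => hC w) (mem_univ x) (mem_univ z)).trans ?_
    have : 0 ≤ C := (norm_nonneg (fderiv ℝ (fderiv ℝ f) x)).trans (hC x)
    gcongr
    exact mem_closedBall_iff_norm.1 hz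
  have := (convex_closedBall x ‖h‖).norm_image_sub_le_of_norm_fderiv_le' (y := x + h)
    (fun z _ => hf.differentiable (by norm_num) z) hfderiv (mem_closedBall_self (norm_nonneg h))
    (by simp)
  rwa [add_sub_cancel_left, mul_assoc, ← sq] at this

lemma abs_add_sub_two_mul_le {f : E → ℝ} (hf : ContDiff ℝ 2 f) {A r : ℝ}
    (hfA : ∀ y, |f y| ≤ A * r ^ 2) (hA : ∀ y, ‖fderiv ℝ (fderiv ℝ f) y‖ ≤ A) (x h : E) :
    |f (x + h) + f (x - h) - 2 * f x| ≤ 4 * A * min (r ^ 2) (‖h‖ ^ 2) := by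
  have hA0 : 0 ≤ A := (norm_nonneg (fderiv ℝ (fderiv ℝ f) x)).trans (hA x)
  rw [mul_min_of_nonneg _ _ (by positivity)]
  refine le_min ?_ ?_
  · have hx := abs_le.1 (hfA x)
    have hadd := abs_le.1 (hfA (x + h))
    have hsub := abs_le.1 (hfA (x - h))
    rw [abs_le]
    constructor <;> linarith
  · have hadd := abs_le.1 (norm_sub_sub_fderiv_le hf hA x h)
    have hsub := abs_le.1 (norm_sub_sub_fderiv_le hf hA x (-h))
    rw [map_neg, norm_neg, ← sub_eq_add_neg] at hsub
    have : 0 ≤ A * ‖h‖ ^ 2 := by positivity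
    rw [abs_le]
    constructor <;> linarith

end Calculus

/-! ### Symmetric nonlocal operators -/

lemma integrable_min_sq_mul {E : Type*} [NormedAddCommGroup E] [MeasurableSpace E] [BorelSpace E]
    {μ : Measure E} {k : E → ℝ} (hkm : AEStronglyMeasurable k μ) (hk : ∀ h, 0 ≤ k h)
    (hint : Integrable (fun h => min 1 (‖h‖ ^ 2) * k h) μ) {r : ℝ} (hr : r ^ 2 ≤ 1) :
    Integrable (fun h => min (r ^ 2) (‖h‖ ^ 2) * k h) μ := by
  refine hint.mono' ((by fun_prop : Measurable fun h : E =>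
    min (r ^ 2) (‖h‖ ^ 2)).aestronglyMeasurable.mul hkm) (ae_of_all _ fun h => ?_)
  rw [Real.norm_of_nonneg (mul_nonneg (by positivity) (hk h))]
  exact mul_le_mul_of_nonneg_right (min_le_min_right _ hr) (hk h)

section LevyIncrement

/-- The compensated increment `f(x+h) - f(x) - ⟨∇f(x), h⟩ 𝟙_{B₁}(h)`, which `opL` integrates
against the kernel `K(x, ·)`. -/
def levyIncrement {E : Type*} [NormedAddCommGroup E] [NormedSpace ℝ E] (f : E → ℝ) (x h : E) : ℝ :=
  f (x + h) - f x - if ‖h‖ < 1 then fderiv ℝ f x h else 0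

variable {E : Type*} [NormedAddCommGroup E] [NormedSpace ℝ E] {f : E → ℝ}

lemma levyIncrement_add_levyIncrement_neg (f : E → ℝ) (x h : E) :
    levyIncrement f x h + levyIncrement f x (-h) = f (x + h) + f (x - h) - 2 * f x := by
  simp only [levyIncrement, norm_neg, map_neg, ← sub_eq_add_neg]
  split_ifs <;> ring

lemma abs_levyIncrement_le (hf : ContDiff ℝ 2 f) {M C : ℝ} (hM : ∀ y, |f y| ≤ M)
    (hC : ∀ y, ‖fderiv ℝ (fderiv ℝ f) y‖ ≤ C) (x h : E) :
    |levyIncrement f x h| ≤ max C (2 * M) * min 1 (‖h‖ ^ 2) := by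
  unfold levyIncrement
  split_ifs with h1
  · rw [min_eq_right (pow_le_one₀ (norm_nonneg h) h1.le)]
    refine (norm_sub_sub_fderiv_le hf hC x h).trans ?_
    gcongr
    exact le_max_left _ _
  · rw [min_eq_left (one_le_pow₀ (not_lt.1 h1)), sub_zero, mul_one]
    refine (abs_sub _ _).trans (le_max_of_le_right ?_)
    linarith [hM (x + h), hM x]

variable [MeasurableSpace E] [BorelSpace E] {μ : Measure E} {k : E → ℝ}

lemma measurable_levyIncrement (hf : Continuous f) (x : E) : Measurable (levyIncrement f x) := by
  have hball : MeasurableSet {h : E | ‖h‖ < 1} := measurableSet_lt measurable_norm measurable_const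
  exact (by fun_prop : Measurable fun h => f (x + h) - f x).sub
    (Measurable.ite hball (fderiv ℝ f x).measurable measurable_const)

lemma integrable_levyIncrement_mul (hf : ContDiff ℝ 2 f) {M C : ℝ} (hM : ∀ y, |f y| ≤ M)
    (hC : ∀ y, ‖fderiv ℝ (fderiv ℝ f) y‖ ≤ C) (hkm : AEStronglyMeasurable k μ)
    (hk : ∀ h, 0 ≤ k h) (hint : Integrable (fun h => min 1 (‖h‖ ^ 2) * k h) μ) (x : E) :
    Integrable (fun h => levyIncrement f x h * k h) μ := by
  refine (hint.const_mul (max C (2 * M))).mono'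
    ((measurable_levyIncrement hf.continuous x).aestronglyMeasurable.mul hkm)
    (ae_of_all _ fun h => ?_)
  rw [norm_mul, Real.norm_eq_abs, Real.norm_of_nonneg (hk h), ← mul_assoc]
  exact mul_le_mul_of_nonneg_right (abs_levyIncrement_le hf hM hC x h) (hk h)

lemma two_mul_integral_levyIncrement_mul [μ.IsNegInvariant] (hk : ∀ h, k (-h) = k h) (x : E)
    (hint : Integrable (fun h => levyIncrement f x h * k h) μ) :
    2 * ∫ h, levyIncrement f x h * k h ∂μ
      = ∫ h, (f (x + h) + f (x - h) - 2 * f x) * k h ∂μ := by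
  have hneg : ∫ h, levyIncrement f x (-h) * k (-h) ∂μ = ∫ h, levyIncrement f x h * k h ∂μ :=
    integral_neg_eq_self (fun h => levyIncrement f x h * k h) μ
  rw [two_mul]
  nth_rw 2 [← hneg]
  rw [← integral_add hint hint.comp_neg]
  simp only [hk, ← add_mul, levyIncrement_add_levyIncrement_neg]

lemma abs_integral_levyIncrement_mul_le [μ.IsNegInvariant] (hf : ContDiff ℝ 2 f) {A r : ℝ}
    (hr : r ^ 2 ≤ 1) (hfA : ∀ y, |f y| ≤ A * r ^ 2) (hA : ∀ y, ‖fderiv ℝ (fderiv ℝ f) y‖ ≤ A)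
    (hkm : AEStronglyMeasurable k μ) (hk : ∀ h, 0 ≤ k h) (hksymm : ∀ h, k (-h) = k h)
    (hint : Integrable (fun h => min 1 (‖h‖ ^ 2) * k h) μ) (x : E) :
    |∫ h, levyIncrement f x h * k h ∂μ| ≤ 2 * A * ∫ h, min (r ^ 2) (‖h‖ ^ 2) * k h ∂μ := by
  have hsymm := two_mul_integral_levyIncrement_mul hksymm x
    (integrable_levyIncrement_mul hf hfA hA hkm hk hint x)
  have hbound : |∫ h, (f (x + h) + f (x - h) - 2 * f x) * k h ∂μ|
      ≤ ∫ h, 4 * A * (min (r ^ 2) (‖h‖ ^ 2) * k h) ∂μ := by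
    rw [← Real.norm_eq_abs]
    refine norm_integral_le_of_norm_le ((integrable_min_sq_mul hkm hk hint hr).const_mul _)
      (ae_of_all _ fun h => ?_)
    rw [norm_mul, Real.norm_eq_abs, Real.norm_of_nonneg (hk h), ← mul_assoc]
    exact mul_le_mul_of_nonneg_right (abs_add_sub_two_mul_le hf hfA hA x h) (hk h)
  rw [← hsymm, abs_mul, abs_two, integral_const_mul] at hbound
  linarith

end LevyIncrement

/-! ### Radial integrals and truncated second moments -/

section Radial

lemma pow_sub_one_mul_div_pow {n : ℕ} (hn : n ≠ 0) (a : ℝ) {s : ℝ} (hs : s ≠ 0) :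
    s ^ (n - 1) * (a / s ^ n) = a / s := by
  rw [← pow_sub_one_mul hn s]
  field_simp

variable {E : Type*} [NormedAddCommGroup E] [NormedSpace ℝ E] [FiniteDimensional ℝ E]
  [Nontrivial E] [MeasurableSpace E] [BorelSpace E] (μ : Measure E) [μ.IsAddHaarMeasure]

lemma integrableOn_ball_div_norm_pow_finrank {g : ℝ → ℝ} {R : ℝ} :
    IntegrableOn (fun h : E => g ‖h‖ / ‖h‖ ^ Module.finrank ℝ E) (ball 0 R) μ ↔
      IntegrableOn (fun s => g s / s) (Ioo 0 R) := by
  rw [integrableOn_fun_norm_addHaar μ (f := fun s => g s / s ^ Module.finrank ℝ E)]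
  exact integrableOn_congr_fun
    (fun s hs => pow_sub_one_mul_div_pow Module.finrank_pos.ne' (g s) hs.1.ne') measurableSet_Ioo

lemma setIntegral_ball_div_norm_pow_finrank (g : ℝ → ℝ) (R : ℝ) :
    ∫ h in ball (0 : E) R, g ‖h‖ / ‖h‖ ^ Module.finrank ℝ E ∂μ =
      Module.finrank ℝ E * (μ.real (ball 0 1) * ∫ s in Ioo 0 R, g s / s) := by
  let φ : ℝ → ℝ := (Iio R).indicator fun s => g s / s ^ Module.finrank ℝ E
  have hφ : (ball (0 : E) R).indicator (fun h => g ‖h‖ / ‖h‖ ^ Module.finrank ℝ E)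
      = fun h => φ ‖h‖ := by
    ext h
    simp [φ, indicator]
  have hradial : ∀ s ∈ Ioi (0 : ℝ), s ^ (Module.finrank ℝ E - 1) • φ s
      = (Iio R).indicator (fun s => g s / s) s := by
    intro s hs
    by_cases hsR : s < R
    · simpa [φ, hsR] using pow_sub_one_mul_div_pow Module.finrank_pos.ne' (g s) (ne_of_gt hs)
    · simp [φ, hsR]
  rw [← integral_indicator measurableSet_ball, hφ, integral_fun_norm_addHaar μ φ,
    setIntegral_congr_fun measurableSet_Ioi hradial, setIntegral_indicator measurableSet_Iio,
    Ioi_inter_Iio, nsmul_eq_mul, smul_eq_mul]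

variable {μ} {ℓ : ℝ → ℝ} {κ : ℝ} {k : E → ℝ}

lemma integrableOn_mul_self_of_le_kernel (hℓmeas : Measurable ℓ)
    (hℓpos : ∀ s, 0 < s → s < 1 → 0 < ℓ s)
    (hint : Integrable (fun h => min 1 (‖h‖ ^ 2) * k h) μ)
    (hlow : ∀ h, 0 < ‖h‖ → ‖h‖ < 1 → ℓ ‖h‖ / ‖h‖ ^ Module.finrank ℝ E ≤ κ * k h) :
    IntegrableOn (fun s => s * ℓ s) (Ioo 0 1) := by
  have hball : IntegrableOn (fun h : E => ‖h‖ ^ 2 * ℓ ‖h‖ / ‖h‖ ^ Module.finrank ℝ E)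
      (ball 0 1) μ := by
    refine (hint.const_mul κ).integrableOn.mono'
      (by fun_prop : Measurable _).aestronglyMeasurable ?_
    filter_upwards [ae_restrict_mem measurableSet_ball,
      ae_restrict_of_ae (Measure.ae_ne μ 0)] with h hh hne
    have h0 : 0 < ‖h‖ := norm_pos_iff.2 hne
    have h1 : ‖h‖ < 1 := mem_ball_zero_iff.1 hh
    have hℓ := hℓpos _ h0 h1
    rw [Real.norm_of_nonneg (by positivity), min_eq_right (pow_le_one₀ h0.le h1.le)]
    calc ‖h‖ ^ 2 * ℓ ‖h‖ / ‖h‖ ^ Module.finrank ℝ E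
        = ‖h‖ ^ 2 * (ℓ ‖h‖ / ‖h‖ ^ Module.finrank ℝ E) := mul_div_assoc _ _ _
      _ ≤ ‖h‖ ^ 2 * (κ * k h) := by gcongr; exact hlow h h0 h1
      _ = κ * (‖h‖ ^ 2 * k h) := mul_left_comm _ _ _
  rw [integrableOn_ball_div_norm_pow_finrank μ (g := fun s => s ^ 2 * ℓ s)] at hball
  refine hball.congr_fun (fun s hs => ?_) measurableSet_Ioo
  have hs0 : s ≠ 0 := hs.1.ne'
  field_simp

lemma integral_min_sq_mul_le (hkm : AEStronglyMeasurable k μ) (hk : ∀ h, 0 ≤ k h)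
    (hint : Integrable (fun h => min 1 (‖h‖ ^ 2) * k h) μ) {r : ℝ} (hr : r ^ 2 ≤ 1)
    (hup : ∀ h, 0 < ‖h‖ → ‖h‖ < 1 → k h ≤ κ * (ℓ ‖h‖ / ‖h‖ ^ Module.finrank ℝ E))
    (hℓint : IntervalIntegrable (fun s => min (r ^ 2) (s ^ 2) * ℓ s / s) volume 0 1) :
    ∫ h, min (r ^ 2) (‖h‖ ^ 2) * k h ∂μ ≤
      κ * (Module.finrank ℝ E * (μ.real (ball 0 1) *
        ∫ s in (0 : ℝ)..1, min (r ^ 2) (s ^ 2) * ℓ s / s)) +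
      r ^ 2 * ∫ h, min 1 (‖h‖ ^ 2) * k h ∂μ := by
  have hintr := integrable_min_sq_mul hkm hk hint hr
  rw [intervalIntegrable_iff_integrableOn_Ioo_of_le zero_le_one] at hℓint
  rw [← integral_add_compl (measurableSet_ball (x := (0 : E)) (ε := 1)) hintr]
  refine add_le_add ?_ ?_
  · rw [intervalIntegral.integral_of_le zero_le_one, integral_Ioc_eq_integral_Ioo,
      ← setIntegral_ball_div_norm_pow_finrank μ (fun s => min (r ^ 2) (s ^ 2) * ℓ s),
      ← integral_const_mul]
    refine setIntegral_mono_ae_restrict hintr.integrableOn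
      (((integrableOn_ball_div_norm_pow_finrank μ).2 hℓint).const_mul κ) ?_
    filter_upwards [ae_restrict_mem measurableSet_ball,
      ae_restrict_of_ae (Measure.ae_ne μ 0)] with h hh hne
    have hkh := hup h (norm_pos_iff.2 hne) (mem_ball_zero_iff.1 hh)
    calc min (r ^ 2) (‖h‖ ^ 2) * k h
        ≤ min (r ^ 2) (‖h‖ ^ 2) * (κ * (ℓ ‖h‖ / ‖h‖ ^ Module.finrank ℝ E)) := by gcongr
      _ = κ * (min (r ^ 2) (‖h‖ ^ 2) * ℓ ‖h‖ / ‖h‖ ^ Module.finrank ℝ E) := by ring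
  · rw [← integral_const_mul]
    calc ∫ h in (ball 0 1)ᶜ, min (r ^ 2) (‖h‖ ^ 2) * k h ∂μ
        ≤ ∫ h in (ball 0 1)ᶜ, r ^ 2 * (min 1 (‖h‖ ^ 2) * k h) ∂μ := by
          refine setIntegral_mono_on hintr.integrableOn (hint.const_mul _).integrableOn
            measurableSet_ball.compl fun h hh => ?_
          have h1 : 1 ≤ ‖h‖ := by simpa using hh
          rw [min_eq_left (one_le_pow₀ h1), one_mul]
          exact mul_le_mul_of_nonneg_right (min_le_left _ _) (hk h)
      _ ≤ ∫ h, r ^ 2 * (min 1 (‖h‖ ^ 2) * k h) ∂μ :=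
          setIntegral_le_integral (hint.const_mul _)
            (ae_of_all _ fun h => mul_nonneg (sq_nonneg r) (mul_nonneg (by positivity) (hk h)))

end Radial

/-! ### Karamata's estimate -/

section Karamata

lemma intervalIntegrable_div_of_mul {ℓ : ℝ → ℝ} {a b : ℝ} (h0 : (0 : ℝ) ∉ uIcc a b)
    (hℓ : IntervalIntegrable (fun s => s * ℓ s) volume a b) :
    IntervalIntegrable (fun s => ℓ s / s) volume a b := by
  have hne : ∀ s ∈ uIcc a b, s ≠ 0 := fun s hs h => h0 (h ▸ hs)
  refine (hℓ.mul_continuousOn (g := fun s => (s ^ 2)⁻¹)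
    (ContinuousOn.inv₀ (by fun_prop) fun s hs => pow_ne_zero 2 (hne s hs))).congr fun s hs => ?_
  have := hne s (uIoc_subset_uIcc hs)
  field_simp

lemma ae_restrict_Ioc_nonneg {g : ℝ → ℝ} {a b : ℝ} (hg : ∀ s ∈ Ioo a b, 0 ≤ g s) :
    0 ≤ᵐ[volume.restrict (Ioc a b)] g := by
  rw [← restrict_Ioo_eq_restrict_Ioc]
  exact ae_restrict_of_forall_mem measurableSet_Ioo hg

lemma integral_half_le {g : ℝ → ℝ} {a b c : ℝ} (hab : a ≤ b)
    (hg : IntervalIntegrable g volume a b)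
    (hg' : IntervalIntegrable g volume (a / 2) (b / 2))
    (hhalf : ∀ s ∈ Ioo a b, g (s / 2) ≤ c * g s) :
    ∫ s in (a / 2)..(b / 2), g s ≤ c / 2 * ∫ s in a..b, g s := by
  have hcomp : IntervalIntegrable (fun s => g (s / 2)) volume a b := by
    simpa [div_eq_inv_mul] using hg'.comp_mul_left (c := 2⁻¹)
  have := intervalIntegral.integral_mono_on_of_le_Ioo hab hcomp (hg.const_mul c) hhalf
  rw [intervalIntegral.integral_comp_div _ two_ne_zero, intervalIntegral.integral_const_mul,
    smul_eq_mul] at this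
  linarith

variable {ℓ : ℝ → ℝ}

lemma exists_lt_four_half_le {α : ℝ} (hα : α < 2) (hℓpos : ∀ s, 0 < s → s < 1 → 0 < ℓ s)
    (hℓreg : RegVaryAt0 ℓ (-α)) :
    ∃ b < 4, 0 < b ∧ ∃ t > 0, t ≤ 1 ∧ ∀ s ∈ Ioo 0 t, ℓ (s / 2) ≤ b * ℓ s := by
  have hlimit : (1 / 2 : ℝ) ^ (-α) < 4 := by
    rw [one_div, Real.inv_rpow zero_le_two, Real.rpow_neg zero_le_two, inv_inv]
    calc (2 : ℝ) ^ α < 2 ^ (2 : ℝ) := Real.rpow_lt_rpow_of_exponent_lt one_lt_two hα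
      _ = 4 := by norm_num
  obtain ⟨b, hαb, hb4⟩ := exists_between hlimit
  obtain ⟨u, hu, hratio⟩ := mem_nhdsGT_iff_exists_Ioo_subset.1
    ((hℓreg (1 / 2) one_half_pos).eventually_lt_const hαb)
  refine ⟨b, hb4, (by positivity : (0 : ℝ) < (1 / 2) ^ (-α)).trans hαb,
    min u 1, lt_min hu one_pos, min_le_right _ _, fun s ⟨hs0, hst⟩ => ?_⟩
  have hs := hratio ⟨hs0, hst.trans_le (min_le_left _ _)⟩
  rw [mem_ofPred_eq, div_lt_iff₀ (hℓpos s hs0 (hst.trans_le (min_le_right _ _))),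
    one_div_mul_eq_div] at hs
  exact hs.le

lemma min_sq_mul_div_of_le {r s : ℝ} (hs : 0 ≤ s) (hsr : s ≤ r) :
    min (r ^ 2) (s ^ 2) * ℓ s / s = s * ℓ s := by
  rcases hs.eq_or_lt with rfl | hs0
  · simp
  · rw [min_eq_right (by gcongr)]
    field_simp

lemma min_sq_mul_div_of_ge {r s : ℝ} (hr : 0 ≤ r) (hrs : r ≤ s) :
    min (r ^ 2) (s ^ 2) * ℓ s / s = r ^ 2 * (ℓ s / s) := by
  rw [min_eq_left (by gcongr), mul_div_assoc]

section Lfun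

variable (hℓpos : ∀ s, 0 < s → s < 1 → 0 < ℓ s)
  (hℓint : IntervalIntegrable (fun s => s * ℓ s) volume 0 1)
include hℓint

lemma intervalIntegrable_mul_self {a b : ℝ} (ha : 0 ≤ a) (hab : a ≤ b) (hb : b ≤ 1) :
    IntervalIntegrable (fun s => s * ℓ s) volume a b :=
  hℓint.mono_set (by
    rw [uIcc_of_le hab, uIcc_of_le zero_le_one]
    exact Icc_subset_Icc ha hb)

lemma intervalIntegrable_div_self {a b : ℝ} (ha : 0 < a) (hab : a ≤ b) (hb : b ≤ 1) :
    IntervalIntegrable (fun s => ℓ s / s) volume a b :=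
  intervalIntegrable_div_of_mul (fun h0 => ha.not_ge (uIcc_of_le hab ▸ h0).1)
    (intervalIntegrable_mul_self hℓint ha.le hab hb)

include hℓpos

lemma integral_div_le_Lfun {r a b : ℝ} (hr : 0 < r) (hra : r ≤ a) (hab : a ≤ b) (hb : b ≤ 1) :
    ∫ s in a..b, ℓ s / s ≤ Lfun ℓ r :=
  intervalIntegral.integral_mono_interval hra hab hb
    (ae_restrict_Ioc_nonneg fun s hs =>
      (div_pos (hℓpos s (hr.trans hs.1) hs.2) (hr.trans hs.1)).le)
    (intervalIntegrable_div_self hℓint hr (hra.trans (hab.trans hb)) le_rfl)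

lemma Lfun_pos {r : ℝ} (hr0 : 0 < r) (hr1 : r < 1) : 0 < Lfun ℓ r :=
  intervalIntegral.intervalIntegral_pos_of_pos_on
    (intervalIntegrable_div_self hℓint hr0 hr1.le le_rfl)
    (fun s hs => div_pos (hℓpos s (hr0.trans hs.1) hs.2) (hr0.trans hs.1)) hr1

lemma integral_mul_self_le_integral_zero_one {r : ℝ} (hr0 : 0 ≤ r) (hr1 : r ≤ 1) :
    ∫ s in (0 : ℝ)..r, s * ℓ s ≤ ∫ s in (0 : ℝ)..1, s * ℓ s :=
  intervalIntegral.integral_mono_interval le_rfl hr0 hr1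
    (ae_restrict_Ioc_nonneg fun s hs => (mul_pos hs.1 (hℓpos s hs.1 hs.2)).le) hℓint

omit hℓpos in
lemma intervalIntegrable_min_sq_mul_div {r : ℝ} (hr0 : 0 < r) (hr1 : r ≤ 1) :
    IntervalIntegrable (fun s => min (r ^ 2) (s ^ 2) * ℓ s / s) volume 0 r ∧
      IntervalIntegrable (fun s => min (r ^ 2) (s ^ 2) * ℓ s / s) volume r 1 := by
  constructor
  · refine (intervalIntegrable_mul_self hℓint le_rfl hr0.le hr1).congr fun s hs => ?_
    rw [uIoc_of_le hr0.le] at hs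
    exact (min_sq_mul_div_of_le hs.1.le hs.2).symm
  · refine ((intervalIntegrable_div_self hℓint hr0 hr1 le_rfl).const_mul (r ^ 2)).congr
      fun s hs => ?_
    rw [uIoc_of_le hr1] at hs
    exact (min_sq_mul_div_of_ge hr0.le hs.1.le).symm

omit hℓpos in
lemma integral_min_sq_mul_div {r : ℝ} (hr0 : 0 < r) (hr1 : r ≤ 1) :
    ∫ s in (0 : ℝ)..1, min (r ^ 2) (s ^ 2) * ℓ s / s =
      (∫ s in (0 : ℝ)..r, s * ℓ s) + r ^ 2 * Lfun ℓ r := by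
  obtain ⟨hnear, hfar⟩ := intervalIntegrable_min_sq_mul_div hℓint hr0 hr1
  rw [← intervalIntegral.integral_add_adjacent_intervals hnear hfar, Lfun,
    ← intervalIntegral.integral_const_mul]
  congr 1 <;> refine intervalIntegral.integral_congr fun s hs => ?_
  · rw [uIcc_of_le hr0.le] at hs
    exact min_sq_mul_div_of_le hs.1 hs.2
  · rw [uIcc_of_le hr1] at hs
    exact min_sq_mul_div_of_ge hr0.le hs.1

lemma integral_mul_self_le_sq_mul_integral_div {a r : ℝ} (ha : 0 < a) (har : a ≤ r)
    (hr : r ≤ 1) : ∫ s in a..r, s * ℓ s ≤ r ^ 2 * ∫ s in a..r, ℓ s / s := by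
  rw [← intervalIntegral.integral_const_mul]
  refine intervalIntegral.integral_mono_on_of_le_Ioo har
    (intervalIntegrable_mul_self hℓint ha.le har hr)
    ((intervalIntegrable_div_self hℓint ha har hr).const_mul _) fun s ⟨has, hsr⟩ => ?_
  have hs : 0 < s := ha.trans has
  have := hℓpos s hs (hsr.trans_le hr)
  calc s * ℓ s = s ^ 2 * (ℓ s / s) := by field_simp
    _ ≤ r ^ 2 * (ℓ s / s) := by gcongr

omit hℓpos in
lemma integral_mul_self_zero_half_le {b r : ℝ} (hr0 : 0 ≤ r) (hr1 : r ≤ 1)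
    (hhalf : ∀ s ∈ Ioo 0 r, ℓ (s / 2) ≤ b * ℓ s) :
    ∫ s in (0 : ℝ)..(r / 2), s * ℓ s ≤ b / 4 * ∫ s in (0 : ℝ)..r, s * ℓ s := by
  have hscaled : ∀ s ∈ Ioo 0 r, s / 2 * ℓ (s / 2) ≤ b / 2 * (s * ℓ s) := fun s hs => by
    calc s / 2 * ℓ (s / 2) ≤ s / 2 * (b * ℓ s) :=
          mul_le_mul_of_nonneg_left (hhalf s hs) (half_pos hs.1).le
      _ = b / 2 * (s * ℓ s) := by ring
  have := integral_half_le hr0 (intervalIntegrable_mul_self hℓint le_rfl hr0 hr1)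
    (intervalIntegrable_mul_self hℓint (by simp) (by linarith) (by linarith)) hscaled
  rw [zero_div] at this
  linarith

lemma integral_mul_self_half_le {b r : ℝ} (hb : 0 ≤ b) (hr0 : 0 < r) (hr1 : 2 * r ≤ 1)
    (hhalf : ∀ s ∈ Ioo r (2 * r), ℓ (s / 2) ≤ b * ℓ s) :
    ∫ s in (r / 2)..r, s * ℓ s ≤ b * r ^ 2 * Lfun ℓ r := by
  have hscaled : ∀ s ∈ Ioo r (2 * r), ℓ (s / 2) / (s / 2) ≤ 2 * b * (ℓ s / s) := fun s hs => by
    have hs0 : 0 < s := hr0.trans hs.1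
    calc ℓ (s / 2) / (s / 2) ≤ b * ℓ s / (s / 2) := by gcongr; exact hhalf s hs
      _ = 2 * b * (ℓ s / s) := by field_simp
  have hshift : ∫ s in (r / 2)..r, ℓ s / s ≤ b * ∫ s in r..(2 * r), ℓ s / s := by
    have := integral_half_le (by linarith)
      (intervalIntegrable_div_self hℓint hr0 (by linarith) hr1)
      (intervalIntegrable_div_self hℓint (by linarith) (by linarith) (by linarith)) hscaled
    rwa [mul_div_cancel_left₀ r two_ne_zero, mul_div_cancel_left₀ b two_ne_zero] at this
  calc ∫ s in (r / 2)..r, s * ℓ s ≤ r ^ 2 * ∫ s in (r / 2)..r, ℓ s / s :=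
        integral_mul_self_le_sq_mul_integral_div hℓpos hℓint (half_pos hr0) (by linarith)
          (by linarith)
    _ ≤ r ^ 2 * (b * Lfun ℓ r) := by
        gcongr
        refine hshift.trans ?_
        gcongr
        exact integral_div_le_Lfun hℓpos hℓint hr0 le_rfl (by linarith) hr1
    _ = b * r ^ 2 * Lfun ℓ r := by ring

lemma integral_mul_self_le_of_half_le {b r : ℝ} (hb0 : 0 ≤ b) (hb4 : b < 4) (hr0 : 0 < r)
    (hr1 : 2 * r ≤ 1) (hhalf : ∀ s ∈ Ioo 0 (2 * r), ℓ (s / 2) ≤ b * ℓ s) :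
    ∫ s in (0 : ℝ)..r, s * ℓ s ≤ 4 * b / (4 - b) * r ^ 2 * Lfun ℓ r := by
  have hhead := integral_mul_self_zero_half_le hℓint hr0.le (by linarith)
    fun s hs => hhalf s ⟨hs.1, by linarith [hs.2]⟩
  have htail := integral_mul_self_half_le hℓpos hℓint hb0 hr0 hr1
    fun s hs => hhalf s ⟨hr0.trans hs.1, hs.2⟩
  have hsplit := intervalIntegral.integral_add_adjacent_intervals
    (intervalIntegrable_mul_self hℓint le_rfl (by linarith : 0 ≤ r / 2) (by linarith))
    (intervalIntegrable_mul_self hℓint (half_pos hr0).le (by linarith) (by linarith : r ≤ 1))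
  -- `hhead` puts a fraction `b / 4 < 1` of the integral on the right, where it is absorbed.
  rw [show 4 * b / (4 - b) * r ^ 2 * Lfun ℓ r = 4 * (b * r ^ 2 * Lfun ℓ r) / (4 - b) by ring,
    le_div_iff₀ (by linarith)]
  linarith

theorem exists_integral_mul_self_le {α ρ : ℝ} (hα : α < 2) (hℓreg : RegVaryAt0 ℓ (-α))
    (hρ0 : 0 < ρ) (hρ1 : ρ < 1) :
    ∃ C > 0, ∀ r, 0 < r → r ≤ ρ → ∫ s in (0 : ℝ)..r, s * ℓ s ≤ C * r ^ 2 * Lfun ℓ r := by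
  obtain ⟨b, hb4, hb0, t, ht0, ht1, hhalf⟩ := exists_lt_four_half_le hα hℓpos hℓreg
  set F := ∫ s in (0 : ℝ)..1, s * ℓ s
  have hF : 0 ≤ F := by
    simpa using integral_mul_self_le_integral_zero_one hℓpos hℓint le_rfl zero_le_one
  have hLρ : 0 < Lfun ℓ ρ := Lfun_pos hℓpos hℓint hρ0 hρ1
  have hb : 0 < 4 * b / (4 - b) := div_pos (by linarith) (by linarith)
  refine ⟨4 * b / (4 - b) + F / ((t / 2) ^ 2 * Lfun ℓ ρ), by positivity, fun r hr0 hrρ => ?_⟩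
  have hL : Lfun ℓ ρ ≤ Lfun ℓ r := integral_div_le_Lfun hℓpos hℓint hr0 hrρ hρ1.le le_rfl
  have hLr : 0 < Lfun ℓ r := hLρ.trans_le hL
  rcases le_or_gt (2 * r) t with hrt | hrt
  · refine (integral_mul_self_le_of_half_le hℓpos hℓint hb0.le hb4 hr0 (hrt.trans ht1)
      fun s hs => hhalf s ⟨hs.1, hs.2.trans_le hrt⟩).trans ?_
    gcongr
    exact le_add_of_nonneg_right (by positivity)
  · calc ∫ s in (0 : ℝ)..r, s * ℓ s ≤ F :=
          integral_mul_self_le_integral_zero_one hℓpos hℓint hr0.le (hrρ.trans hρ1.le)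
      _ = F / ((t / 2) ^ 2 * Lfun ℓ ρ) * (t / 2) ^ 2 * Lfun ℓ ρ := by field_simp
      _ ≤ F / ((t / 2) ^ 2 * Lfun ℓ ρ) * r ^ 2 * Lfun ℓ r := by
          gcongr
          linarith
      _ ≤ _ := by
          gcongr
          exact le_add_of_nonneg_left hb.le

end Lfun

end Karamata

/-! ### The kernel conditions -/

namespace KernelConds

variable {d : ℕ} {K₀ κ : ℝ} {ℓ : ℝ → ℝ}
  {K : EuclideanSpace ℝ (Fin d) → EuclideanSpace ℝ (Fin d) → ℝ}

lemma measurable_slice (hK : KernelConds d K₀ κ ℓ K) (x : EuclideanSpace ℝ (Fin d)) :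
    Measurable (K x) :=
  hK.1.of_uncurry_left

lemma nonneg (hK : KernelConds d K₀ κ ℓ K) (x h : EuclideanSpace ℝ (Fin d)) : 0 ≤ K x h :=
  hK.2.1 x h

lemma neg_eq (hK : KernelConds d K₀ κ ℓ K) (x h : EuclideanSpace ℝ (Fin d)) :
    K x (-h) = K x h :=
  (hK.2.2.2.1 x h).symm

lemma le_div (hK : KernelConds d K₀ κ ℓ K) (x h : EuclideanSpace ℝ (Fin d)) (h0 : 0 < ‖h‖)
    (h1 : ‖h‖ ≤ 1) : K x h ≤ κ * (ℓ ‖h‖ / ‖h‖ ^ d) :=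
  (hK.2.2.2.2 x h h0 h1).2

lemma div_le (hK : KernelConds d K₀ κ ℓ K) (hκ : 0 < κ) (x h : EuclideanSpace ℝ (Fin d))
    (h0 : 0 < ‖h‖) (h1 : ‖h‖ ≤ 1) : ℓ ‖h‖ / ‖h‖ ^ d ≤ κ * K x h :=
  (inv_mul_le_iff₀ hκ).1 (hK.2.2.2.2 x h h0 h1).1

variable [Nonempty (Fin d)]

lemma lintegral_min_one_sq_mul_le (hK : KernelConds d K₀ κ ℓ K) (x : EuclideanSpace ℝ (Fin d)) :
    ∫⁻ h, ENNReal.ofReal (min 1 (‖h‖ ^ 2) * K x h) ≤ ENNReal.ofReal K₀ := by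
  simpa only [restrict_compl_singleton] using hK.2.2.1 x

lemma integrable_min_one_sq_mul (hK : KernelConds d K₀ κ ℓ K) (x : EuclideanSpace ℝ (Fin d)) :
    Integrable fun h => min 1 (‖h‖ ^ 2) * K x h := by
  refine ⟨((by fun_prop : Measurable fun h : EuclideanSpace ℝ (Fin d) =>
    min 1 (‖h‖ ^ 2)).mul (hK.measurable_slice x)).aestronglyMeasurable, ?_⟩
  rw [hasFiniteIntegral_iff_ofReal
    (ae_of_all _ fun h => mul_nonneg (by positivity) (hK.nonneg x h))]
  exact (hK.lintegral_min_one_sq_mul_le x).trans_lt ENNReal.ofReal_lt_top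

lemma integral_min_one_sq_mul_le (hK₀ : 0 ≤ K₀) (hK : KernelConds d K₀ κ ℓ K)
    (x : EuclideanSpace ℝ (Fin d)) : ∫ h, min 1 (‖h‖ ^ 2) * K x h ≤ K₀ := by
  rw [integral_eq_lintegral_of_nonneg_ae
    (ae_of_all _ fun h => mul_nonneg (by positivity) (hK.nonneg x h))
    (hK.integrable_min_one_sq_mul x).aestronglyMeasurable]
  exact ENNReal.toReal_le_of_le_ofReal hK₀ (hK.lintegral_min_one_sq_mul_le x)

lemma intervalIntegrable_mul_self (hK : KernelConds d K₀ κ ℓ K) (hκ : 0 < κ)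
    (hℓmeas : Measurable ℓ) (hℓpos : ∀ s, 0 < s → s < 1 → 0 < ℓ s) :
    IntervalIntegrable (fun s => s * ℓ s) volume 0 1 := by
  rw [intervalIntegrable_iff_integrableOn_Ioo_of_le zero_le_one]
  refine integrableOn_mul_self_of_le_kernel (κ := κ) hℓmeas hℓpos (hK.integrable_min_one_sq_mul 0)
    fun h h0 h1 => ?_
  rw [finrank_euclideanSpace_fin]
  exact hK.div_le hκ 0 h h0 h1.le

lemma integral_min_sq_mul_le (hK₀ : 0 ≤ K₀) (hK : KernelConds d K₀ κ ℓ K)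
    (hℓint : IntervalIntegrable (fun s => s * ℓ s) volume 0 1) (x : EuclideanSpace ℝ (Fin d))
    {r : ℝ} (hr0 : 0 < r) (hr1 : r ≤ 1) :
    ∫ h, min (r ^ 2) (‖h‖ ^ 2) * K x h ≤
      κ * (d * (volume.real (ball (0 : EuclideanSpace ℝ (Fin d)) 1) *
        ((∫ s in (0 : ℝ)..r, s * ℓ s) + r ^ 2 * Lfun ℓ r))) + r ^ 2 * K₀ := by
  obtain ⟨hnear, hfar⟩ := intervalIntegrable_min_sq_mul_div hℓint hr0 hr1
  have := _root_.integral_min_sq_mul_le (hK.measurable_slice x).aestronglyMeasurable (hK.nonneg x)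
    (hK.integrable_min_one_sq_mul x) (pow_le_one₀ hr0.le hr1)
    (fun h h0 h1 => by simpa using hK.le_div x h h0 h1.le) (hnear.trans hfar)
  rw [finrank_euclideanSpace_fin, integral_min_sq_mul_div hℓint hr0 hr1] at this
  refine this.trans ?_
  gcongr
  exact hK.integral_min_one_sq_mul_le hK₀ x

theorem exists_integral_min_sq_mul_le {α ρ : ℝ} (hK₀ : 0 < K₀) (hκ : 0 < κ) (hα : α < 2)
    (hℓmeas : Measurable ℓ) (hℓpos : ∀ s, 0 < s → s < 1 → 0 < ℓ s) (hℓreg : RegVaryAt0 ℓ (-α))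
    (hρ0 : 0 < ρ) (hρ1 : ρ < 1) :
    ∃ C > 0, ∀ K : EuclideanSpace ℝ (Fin d) → EuclideanSpace ℝ (Fin d) → ℝ,
      KernelConds d K₀ κ ℓ K → ∀ x r, 0 < r → r ≤ ρ →
        ∫ h, min (r ^ 2) (‖h‖ ^ 2) * K x h ≤ C * r ^ 2 * Lfun ℓ r := by
  -- `ℓ` may blow up at `1`, but the mere existence of a kernel makes `s ℓ(s)` integrable there.
  by_cases hex : ∃ K, KernelConds d K₀ κ ℓ K
  swap
  · exact ⟨1, one_pos, fun K hK => (hex ⟨K, hK⟩).elim⟩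
  obtain ⟨K', hK'⟩ := hex
  have hℓint := hK'.intervalIntegrable_mul_self hκ hℓmeas hℓpos
  obtain ⟨C, hC, hkaramata⟩ := exists_integral_mul_self_le hℓpos hℓint hα hℓreg hρ0 hρ1
  have hLρ := Lfun_pos hℓpos hℓint hρ0 hρ1
  set V := volume.real (ball (0 : EuclideanSpace ℝ (Fin d)) 1)
  refine ⟨κ * (d * (V * (C + 1))) + K₀ / Lfun ℓ ρ, by positivity, fun K hK x r hr0 hrρ => ?_⟩
  have hL : Lfun ℓ ρ ≤ Lfun ℓ r := integral_div_le_Lfun hℓpos hℓint hr0 hrρ hρ1.le le_rfl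
  calc ∫ h, min (r ^ 2) (‖h‖ ^ 2) * K x h
      ≤ κ * (d * (V * ((∫ s in (0 : ℝ)..r, s * ℓ s) + r ^ 2 * Lfun ℓ r))) + r ^ 2 * K₀ :=
        hK.integral_min_sq_mul_le hK₀.le hℓint x hr0 (hrρ.trans hρ1.le)
    _ ≤ κ * (d * (V * (C * r ^ 2 * Lfun ℓ r + r ^ 2 * Lfun ℓ r))) +
          r ^ 2 * (K₀ * (Lfun ℓ r / Lfun ℓ ρ)) := by
        gcongr
        · exact hkaramata r hr0 hrρ
        · exact le_mul_of_one_le_right hK₀.le ((one_le_div hLρ).2 hL)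
    _ = (κ * (d * (V * (C + 1))) + K₀ / Lfun ℓ ρ) * r ^ 2 * Lfun ℓ r := by ring

lemma abs_opL_le (hK : KernelConds d K₀ κ ℓ K) {f : EuclideanSpace ℝ (Fin d) → ℝ}
    (hf : ContDiff ℝ 2 f) {A r : ℝ} (hr : r ^ 2 ≤ 1) (hfA : ∀ y, |f y| ≤ A * r ^ 2)
    (hA : ∀ y, ‖fderiv ℝ (fderiv ℝ f) y‖ ≤ A) (x : EuclideanSpace ℝ (Fin d)) :
    |opL d K f x| ≤ 2 * A * ∫ h, min (r ^ 2) (‖h‖ ^ 2) * K x h := by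
  rw [opL, restrict_compl_singleton]
  exact abs_integral_levyIncrement_mul_le hf hr hfA hA
    (hK.measurable_slice x).aestronglyMeasurable (hK.nonneg x) (hK.neg_eq x)
    (hK.integrable_min_one_sq_mul x) x

end KernelConds

theorem statement9_general (d : ℕ) (hd : 1 ≤ d) (K₀ κ α ρ : ℝ) (hK₀ : 0 < K₀) (hκ : 0 < κ)
    (hα : α < 2) (hρ0 : 0 < ρ) (hρ1 : ρ < 1) (ℓ : ℝ → ℝ) (hℓmeas : Measurable ℓ)
    (hℓpos : ∀ s : ℝ, 0 < s → s < 1 → 0 < ℓ s) (hℓreg : RegVaryAt0 ℓ (-α))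
    (c₁ : ℝ) (hc₁ : 0 < c₁) :
    ∃ c₆ : ℝ, 0 < c₆ ∧
      ∀ K : EuclideanSpace ℝ (Fin d) → EuclideanSpace ℝ (Fin d) → ℝ,
        KernelConds d K₀ κ ℓ K →
        ∀ r : ℝ, 0 < r → r ≤ ρ →
          ∀ f : EuclideanSpace ℝ (Fin d) → ℝ, ContDiff ℝ 2 f →
            (∀ x, |f x| ≤ c₁ * r ^ 2) →
            (∀ x (i j : Fin d),
              |fderiv ℝ (fderiv ℝ f) x (EuclideanSpace.single i (1:ℝ))
                  (EuclideanSpace.single j (1:ℝ))| ≤ c₁) →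
            ∀ x, |opL d K f x| ≤ c₆ * r ^ 2 * Lfun ℓ r := by
  have : Nonempty (Fin d) := ⟨⟨0, hd⟩⟩
  obtain ⟨C, hC, hmoment⟩ :=
    KernelConds.exists_integral_min_sq_mul_le (d := d) hK₀ hκ hα hℓmeas hℓpos hℓreg hρ0 hρ1
  have hA : c₁ ≤ d ^ 2 * c₁ :=
    le_mul_of_one_le_left hc₁.le (one_le_pow₀ (by exact_mod_cast hd))
  refine ⟨2 * (d ^ 2 * c₁) * C, by positivity, fun K hK r hr0 hrρ f hf hfr hf2 x => ?_⟩
  calc |opL d K f x| ≤ 2 * (d ^ 2 * c₁) * ∫ h, min (r ^ 2) (‖h‖ ^ 2) * K x h :=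
        hK.abs_opL_le hf (pow_le_one₀ hr0.le (hrρ.trans hρ1.le))
          (fun y => (hfr y).trans (by gcongr))
          (fun y => norm_bilin_le_of_abs_apply_single_le _ (hf2 y)) x
    _ ≤ 2 * (d ^ 2 * c₁) * (C * r ^ 2 * Lfun ℓ r) := by
        gcongr
        exact hmoment K hK x r hr0 hrρ
    _ = 2 * (d ^ 2 * c₁) * C * r ^ 2 * Lfun ℓ r := by ring

/-- For every `c₁ ≥ 1` there exists `c₆ > 0`, depending only on
`d, K₀, κ, α, ℓ, c₁`, such that: for every `x₀`, every `r ∈ (0,1/2]` and every nonnegative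
`f ∈ C²_b` with `f(x) = |x-x₀|²` for `|x-x₀| ≤ r/2`, `f(x) = r²` for `|x-x₀| ≥ r`, and
`‖f‖_∞ ≤ c₁ r²`, `‖∂f/∂xᵢ‖_∞ ≤ c₁ r`, `‖∂²f/∂xᵢ∂xⱼ‖_∞ ≤ c₁`, one has
`ℒf(x) ≤ c₆ r² L(r)` on `B_r(x₀)`. -/
theorem statement9 (d : ℕ) (hd : 1 ≤ d) (K₀ κ α : ℝ) (hK₀ : 0 < K₀) (hκ : 1 < κ)
    (hα₀ : 0 ≤ α) (hα₂ : α < 2) (ℓ : ℝ → ℝ) (hℓmeas : Measurable ℓ)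
    (hℓpos : ∀ s : ℝ, 0 < s → s < 1 → 0 < ℓ s)
    (hℓbdd : LocBddAway ℓ) (hℓreg : RegVaryAt0 ℓ (-α))
    (c₁ : ℝ) (hc₁ : 1 ≤ c₁) :
    ∃ c₆ : ℝ, 0 < c₆ ∧
      ∀ K : EuclideanSpace ℝ (Fin d) → EuclideanSpace ℝ (Fin d) → ℝ,
        KernelConds d K₀ κ ℓ K →
        ∀ (x₀ : EuclideanSpace ℝ (Fin d)) (r : ℝ), 0 < r → r ≤ 1 / 2 →
          ∀ f : EuclideanSpace ℝ (Fin d) → ℝ, C2b d f → (∀ x, 0 ≤ f x) →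
            (∀ x, ‖x - x₀‖ ≤ r / 2 → f x = ‖x - x₀‖ ^ 2) →
            (∀ x, r ≤ ‖x - x₀‖ → f x = r ^ 2) →
            (∀ x, |f x| ≤ c₁ * r ^ 2) →
            (∀ x (i : Fin d),
              |fderiv ℝ f x (EuclideanSpace.single i (1:ℝ))| ≤ c₁ * r) →
            (∀ x (i j : Fin d),
              |fderiv ℝ (fderiv ℝ f) x (EuclideanSpace.single i (1:ℝ))
                  (EuclideanSpace.single j (1:ℝ))| ≤ c₁) →
            ∀ x ∈ Metric.ball x₀ r, opL d K f x ≤ c₆ * r ^ 2 * Lfun ℓ r := by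
  obtain ⟨c₆, hc₆, hbound⟩ := statement9_general d hd K₀ κ α (1 / 2) hK₀ (by linarith) hα₂
    (by norm_num) (by norm_num) ℓ hℓmeas hℓpos hℓreg c₁ (by linarith)
  exact ⟨c₆, hc₆, fun K hK x₀ r hr0 hr f hf _ _ _ hfr _ hf2 x _ =>
    le_of_abs_le (hbound K hK r hr0 hr f hf.1 hfr hf2 x)⟩
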